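/- Privacy-leakage converse bound (small key regime): under the converse setup, I(X^n; W | Z^n) ≥ Σ_{i=1}^n ( I(U_i; X_i | Z_i) + [I(U_i; Z_i | V_i) − I(U_i; Y_i | V_i)]^- ) − H(K). -/

import Mathlib

open MeasureTheory

noncomputable section

/-- Probability mass `P[X = x]` of a finitely-valued random variable `X` on `(Ω, μ)`. -/
def pmass {Ω : Type*} [MeasurableSpace Ω] (μ : Measure Ω) {α : Type*}
    (X : Ω → α) (x : α) : ℝ :=
  (μ (X ⁻¹' {x})).toReal

/-- Shannon entropy `H(X)` (in nats) of a finitely-valued random variable. -/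
def entropyRV {Ω : Type*} [MeasurableSpace Ω] (μ : Measure Ω) {α : Type*} [Fintype α]
    (X : Ω → α) : ℝ :=
  ∑ x : α, Real.negMulLog (pmass μ X x)

/-- Conditional Shannon entropy `H(X | Y)`. -/
def condEntropyRV {Ω : Type*} [MeasurableSpace Ω] (μ : Measure Ω) {α β : Type*}
    [Fintype α] [Fintype β] (X : Ω → α) (Y : Ω → β) : ℝ :=
  entropyRV μ (fun ω => (X ω, Y ω)) - entropyRV μ Y

/-- Mutual information `I(X;Y)`. -/
def mutualInfoRV {Ω : Type*} [MeasurableSpace Ω] (μ : Measure Ω) {α β : Type*}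
    [Fintype α] [Fintype β] (X : Ω → α) (Y : Ω → β) : ℝ :=
  entropyRV μ X + entropyRV μ Y - entropyRV μ (fun ω => (X ω, Y ω))

/-- Conditional mutual information `I(X;Y|Z)`. -/
def condMutualInfoRV {Ω : Type*} [MeasurableSpace Ω] (μ : Measure Ω) {α β γ : Type*}
    [Fintype α] [Fintype β] [Fintype γ] (X : Ω → α) (Y : Ω → β) (Z : Ω → γ) : ℝ :=
  entropyRV μ (fun ω => (X ω, Z ω)) + entropyRV μ (fun ω => (Y ω, Z ω))
    - entropyRV μ Z - entropyRV μ (fun ω => (X ω, Y ω, Z ω))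

/-- Expected value `E[f(X)]` of a function of a finitely-valued random variable. -/
def expVal {Ω : Type*} [MeasurableSpace Ω] (μ : Measure Ω) {α : Type*} [Fintype α]
    (X : Ω → α) (f : α → ℝ) : ℝ :=
  ∑ a : α, pmass μ X a * f a

/-- Independence of two finitely-valued random variables, via their joint mass. -/
def IndepRV {Ω : Type*} [MeasurableSpace Ω] (μ : Measure Ω) {α β : Type*}
    (X : Ω → α) (Y : Ω → β) : Prop :=
  ∀ a b, pmass μ (fun ω => (X ω, Y ω)) (a, b) = pmass μ X a * pmass μ Y b

/-- Conditional independence of `A` and `C` given `B` (the Markov chain `A − B − C`)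
for finitely-valued random variables, via joint masses. -/
def CondIndepRV {Ω : Type*} [MeasurableSpace Ω] (μ : Measure Ω) {α β γ : Type*}
    (A : Ω → α) (B : Ω → β) (C : Ω → γ) : Prop :=
  ∀ a b c,
    pmass μ (fun ω => (A ω, B ω, C ω)) (a, b, c) * pmass μ B b
      = pmass μ (fun ω => (A ω, B ω)) (a, b) * pmass μ (fun ω => (B ω, C ω)) (b, c)

/-- `X` is uniformly distributed on its (finite) alphabet. -/
def UniformRV {Ω : Type*} [MeasurableSpace Ω] (μ : Measure Ω) {α : Type*} [Fintype α]
    (X : Ω → α) : Prop :=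
  ∀ x, pmass μ X x = 1 / (Fintype.card α : ℝ)

/-- The sequence `S = (S_1, …, S_n)` is i.i.d. with single-letter pmf `p`. -/
def HasIIDLaw {Ω : Type*} [MeasurableSpace Ω] (μ : Measure Ω) {α : Type*} {n : ℕ}
    (S : Ω → Fin n → α) (p : α → ℝ) : Prop :=
  ∀ v : Fin n → α, pmass μ S v = ∏ i, p (v i)

/-- `[a]⁻ = min {a, 0}`. -/
def negPartR (a : ℝ) : ℝ := min a 0

open ProbabilityTheory

/-!
Writing `Uᵢ`, `Vᵢ` for the auxiliary variables and `Cᵢ = (Xᵢ, Zᵢ)`, each summand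
`I(Uᵢ; Xᵢ | Zᵢ) + I(Uᵢ; Zᵢ | Vᵢ) - I(Uᵢ; Yᵢ | Vᵢ)` equals
`H(Xᵢ | Zᵢ) + (H(Zᵢ | Vᵢ) - H(Yᵢ | Vᵢ)) - (H(Cᵢ | Uᵢ) - H(Yᵢ | Uᵢ))`.
Both brackets telescope by Csiszár's sum identity, with side information `W` and `(W, K)`
respectively, and `∑ᵢ H(Xᵢ | Zᵢ) = H(Xⁿ | Zⁿ)` by independence. The outcome is the exact formula
`I(Xⁿ; W | Zⁿ) = ∑ᵢ (…) + H(K | Xⁿ, W, Zⁿ) - H(K | Yⁿ, W)`,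
whose last two terms are at least `0` and `-H(K)`. The bound thus holds even without `[·]⁻`.
-/

section Relabelling

variable {Ω α β γ δ : Type*} [MeasurableSpace Ω] [Fintype α] [Fintype β] [Fintype γ] [Fintype δ]
  {μ : Measure Ω}

lemma exists_eq_of_negMulLog_pmass_ne_zero {α : Type*} {A : Ω → α} {a : α}
    (h : Real.negMulLog (pmass μ A a) ≠ 0) : ∃ ω, A ω = a := by
  by_contra! hA
  have hempty : A ⁻¹' {a} = ∅ := Set.eq_empty_of_forall_notMem hA
  simp [pmass, hempty] at h

-- The nonzero terms of the entropy sum are indexed by the nonempty fibres, which `A` and `B` share.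
lemma entropyRV_congr {A : Ω → α} {B : Ω → β} (h : ∀ ω ω', A ω = A ω' ↔ B ω = B ω') :
    entropyRV μ A = entropyRV μ B := by
  have hfibre (ω : Ω) : pmass μ A (A ω) = pmass μ B (B ω) := by
    have : A ⁻¹' {A ω} = B ⁻¹' {B ω} := Set.ext fun ω' => h ω' ω
    rw [pmass, pmass, this]
  choose ω hω using fun a (ha : Real.negMulLog (pmass μ A a) ≠ 0) =>
    exists_eq_of_negMulLog_pmass_ne_zero ha
  refine Finset.sum_bij_ne_zero (fun a _ ha => B (ω a ha)) (fun _ _ _ => Finset.mem_univ _)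
    ?_ ?_ ?_
  · intro a₁ _ ha₁ a₂ _ ha₂ hB
    rw [← hω a₁ ha₁, ← hω a₂ ha₂, h]
    exact hB
  · intro b _ hb
    obtain ⟨ω₀, rfl⟩ := exists_eq_of_negMulLog_pmass_ne_zero hb
    have ha : Real.negMulLog (pmass μ A (A ω₀)) ≠ 0 := by rwa [hfibre]
    exact ⟨A ω₀, Finset.mem_univ _, ha, (h _ _).1 (hω _ ha)⟩
  · intro a _ ha
    rw [← hfibre, hω]

lemma condEntropyRV_congr_left {A : Ω → α} {A' : Ω → β} (B : Ω → γ)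
    (h : ∀ ω ω', A ω = A ω' ↔ A' ω = A' ω') :
    condEntropyRV μ A B = condEntropyRV μ A' B := by
  have hpair : entropyRV μ (fun ω => (A ω, B ω)) = entropyRV μ (fun ω => (A' ω, B ω)) :=
    entropyRV_congr fun ω ω' => by simp only [Prod.mk.injEq, h]
  rw [condEntropyRV, condEntropyRV, hpair]

lemma condEntropyRV_congr_right (A : Ω → α) {B : Ω → β} {B' : Ω → γ}
    (h : ∀ ω ω', B ω = B ω' ↔ B' ω = B' ω') :
    condEntropyRV μ A B = condEntropyRV μ A B' := by
  have hpair : entropyRV μ (fun ω => (A ω, B ω)) = entropyRV μ (fun ω => (A ω, B' ω)) :=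
    entropyRV_congr fun ω ω' => by simp only [Prod.mk.injEq, h]
  rw [condEntropyRV, condEntropyRV, hpair, entropyRV_congr h]

lemma condEntropyRV_prodMk (A : Ω → α) (B : Ω → β) (C : Ω → γ) :
    condEntropyRV μ (fun ω => (A ω, B ω)) C =
      condEntropyRV μ B C + condEntropyRV μ A (fun ω => (B ω, C ω)) := by
  have hassoc : entropyRV μ (fun ω => ((A ω, B ω), C ω)) =
      entropyRV μ (fun ω => (A ω, (B ω, C ω))) :=
    entropyRV_congr fun ω ω' => by simp only [Prod.mk.injEq, and_assoc]
  rw [condEntropyRV, condEntropyRV, condEntropyRV, hassoc]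
  ring

lemma condMutualInfoRV_eq_condEntropyRV_sub (A : Ω → α) (B : Ω → β) (C : Ω → γ) :
    condMutualInfoRV μ A B C =
      condEntropyRV μ B C - condEntropyRV μ B (fun ω => (A ω, C ω)) := by
  have hswap : entropyRV μ (fun ω => (A ω, B ω, C ω)) = entropyRV μ (fun ω => (B ω, A ω, C ω)) :=
    entropyRV_congr fun ω ω' => by simp only [Prod.mk.injEq, and_left_comm]
  rw [condMutualInfoRV, condEntropyRV, condEntropyRV, hswap]
  ring

lemma condMutualInfoRV_eq_condEntropyRV_sub_of_factorsThrough (A : Ω → α) {U : Ω → β} {V : Ω → γ}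
    (hVU : V.FactorsThrough U) :
    condMutualInfoRV μ U A V = condEntropyRV μ A V - condEntropyRV μ A U := by
  have hUV : condEntropyRV μ A (fun ω => (U ω, V ω)) = condEntropyRV μ A U :=
    condEntropyRV_congr_right A fun ω ω' => by
      simpa only [Prod.mk.injEq, and_iff_left_iff_imp] using @hVU ω ω'
  rw [condMutualInfoRV_eq_condEntropyRV_sub, hUV]

lemma condMutualInfoRV_add_sub_eq {ε : Type*} [Fintype ε] (X : Ω → α) (Y : Ω → β) (Z : Ω → γ)
    {U : Ω → δ} {V : Ω → ε} (hVU : V.FactorsThrough U) :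
    condMutualInfoRV μ U X Z + (condMutualInfoRV μ U Z V - condMutualInfoRV μ U Y V) =
      condEntropyRV μ X Z + (condEntropyRV μ Z V - condEntropyRV μ Y V)
        - (condEntropyRV μ (fun ω => (X ω, Z ω)) U - condEntropyRV μ Y U) := by
  have hswap : condEntropyRV μ X (fun ω => (U ω, Z ω)) = condEntropyRV μ X (fun ω => (Z ω, U ω)) :=
    condEntropyRV_congr_right X fun ω ω' => by simp only [Prod.mk.injEq, and_comm]
  rw [condMutualInfoRV_eq_condEntropyRV_sub, hswap,
    condMutualInfoRV_eq_condEntropyRV_sub_of_factorsThrough Z hVU,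
    condMutualInfoRV_eq_condEntropyRV_sub_of_factorsThrough Y hVU, condEntropyRV_prodMk]
  ring

end Relabelling

section Csiszar

variable {Ω α β τ : Type*} {n : ℕ}

/-- The variable `V_i = (T, B_{i+1}^n, A^{i-1})`: side information `T`, the future of `B` and the
past of `A`. It is the conditioning variable of Csiszár's sum identity. -/
def pastFuture (T : Ω → τ) (A : Ω → Fin n → α) (B : Ω → Fin n → β) (i : Fin n) (ω : Ω) :
    τ × ({j : Fin n // i < j} → β) × ({j : Fin n // j.1 < i} → α) :=
  (T ω, fun j => B ω j, fun j => A ω j)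

/-- The variable `(T, A_1, …, A_k, B_{k+1}, …, B_n)`, which interpolates between `(T, B)` at `k = 0`
and `(T, A)` at `k = n`. The first `k` coordinates are those of value `< k` in `Fin n`. -/
def hybrid (T : Ω → τ) (A : Ω → Fin n → α) (B : Ω → Fin n → β) (k : ℕ) (ω : Ω) :
    τ × ({j : Fin n // j.1 < k} → α) × ({j : Fin n // k ≤ j.1} → β) :=
  (T ω, fun j => A ω j, fun j => B ω j)

variable [MeasurableSpace Ω] [Fintype α] [Fintype β] [Fintype τ] {μ : Measure Ω}
  (T : Ω → τ) (A : Ω → Fin n → α) (B : Ω → Fin n → β)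

lemma entropyRV_left_pastFuture (i : Fin n) :
    entropyRV μ (fun ω => (A ω i, pastFuture T A B i ω)) =
      entropyRV μ (hybrid T A B (i + 1)) := by
  refine entropyRV_congr fun ω ω' => ?_
  simp only [pastFuture, hybrid, Prod.mk.injEq, funext_iff, Subtype.forall,
    Nat.lt_succ_iff_lt_or_eq, Nat.add_one_le_iff, Fin.val_fin_lt, Fin.val_inj, or_imp, forall_and,
    forall_eq]
  tauto

lemma entropyRV_right_pastFuture (i : Fin n) :
    entropyRV μ (fun ω => (B ω i, pastFuture T A B i ω)) = entropyRV μ (hybrid T A B i) := by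
  refine entropyRV_congr fun ω ω' => ?_
  simp only [pastFuture, hybrid, Prod.mk.injEq, funext_iff, Subtype.forall, Fin.val_fin_lt,
    Fin.val_inj, le_iff_lt_or_eq, or_imp, forall_and, forall_eq']
  tauto

lemma entropyRV_hybrid_zero :
    entropyRV μ (hybrid T A B 0) = entropyRV μ (fun ω => (B ω, T ω)) :=
  entropyRV_congr fun ω ω' => by simp [hybrid, funext_iff, and_comm]

lemma entropyRV_hybrid_last :
    entropyRV μ (hybrid T A B n) = entropyRV μ (fun ω => (A ω, T ω)) :=
  entropyRV_congr fun ω ω' => by simp [hybrid, funext_iff, and_comm]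

theorem csiszar_sum_identity :
    ∑ i, (condEntropyRV μ (fun ω => A ω i) (pastFuture T A B i)
        - condEntropyRV μ (fun ω => B ω i) (pastFuture T A B i)) =
      condEntropyRV μ A T - condEntropyRV μ B T := by
  calc
    _ = ∑ i : Fin n, (entropyRV μ (hybrid T A B (i + 1)) - entropyRV μ (hybrid T A B i)) := by
      simp only [condEntropyRV, sub_sub_sub_cancel_right, entropyRV_left_pastFuture,
        entropyRV_right_pastFuture]
    _ = entropyRV μ (hybrid T A B n) - entropyRV μ (hybrid T A B 0) := by
      rw [Fin.sum_univ_eq_sum_range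
        (fun k => entropyRV μ (hybrid T A B (k + 1)) - entropyRV μ (hybrid T A B k)),
        Finset.sum_range_sub fun k => entropyRV μ (hybrid T A B k)]
    _ = _ := by
      rw [entropyRV_hybrid_zero, entropyRV_hybrid_last, condEntropyRV, condEntropyRV,
        sub_sub_sub_cancel_right]

end Csiszar

section EntropyInequalities

variable {Ω α β : Type*} [MeasurableSpace Ω] {μ : Measure Ω}

lemma pmass_nonneg (A : Ω → α) (a : α) : 0 ≤ pmass μ A a := ENNReal.toReal_nonneg

lemma pmass_le_pmass_comp [IsFiniteMeasure μ] (A : Ω → α) (g : α → β) (a : α) :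
    pmass μ A a ≤ pmass μ (fun ω => g (A ω)) (g a) :=
  measureReal_mono fun _ hω => congrArg g hω

lemma entropyRV_eq_expVal_neg_log [Fintype α] (A : Ω → α) :
    entropyRV μ A = expVal μ A (fun a => -Real.log (pmass μ A a)) := by
  simp only [entropyRV, expVal, Real.negMulLog, neg_mul, mul_neg]

variable [MeasurableSpace α] [DiscreteMeasurableSpace α] {A : Ω → α}

lemma sum_pmass_eq_measureReal [IsFiniteMeasure μ] (hA : Measurable A) (s : Finset α) :
    ∑ a ∈ s, pmass μ A a = μ.real (A ⁻¹' s) :=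
  sum_measureReal_preimage_singleton s fun a _ => hA (measurableSet_singleton a)

variable [Fintype α]

lemma sum_pmass [IsProbabilityMeasure μ] (hA : Measurable A) : ∑ a, pmass μ A a = 1 := by
  simp [sum_pmass_eq_measureReal hA]

lemma expVal_comp [IsFiniteMeasure μ] [Fintype β] (hA : Measurable A) (g : α → β) (f : β → ℝ) :
    expVal μ (fun ω => g (A ω)) f = expVal μ A (fun a => f (g a)) := by
  classical
  have hfibre (b : β) : pmass μ (fun ω => g (A ω)) b = ∑ a with g a = b, pmass μ A a := by
    rw [sum_pmass_eq_measureReal hA]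
    simp [pmass, Measure.real, Set.preimage]
  simp only [expVal, hfibre, Finset.sum_mul]
  rw [← Finset.sum_fiberwise Finset.univ g]
  refine Finset.sum_congr rfl fun b _ => Finset.sum_congr rfl fun a ha => ?_
  rw [(Finset.mem_filter.1 ha).2]

lemma entropyRV_comp_eq_expVal_neg_log [IsFiniteMeasure μ] [Fintype β] (hA : Measurable A)
    (g : α → β) :
    entropyRV μ (fun ω => g (A ω)) =
      expVal μ A (fun a => -Real.log (pmass μ (fun ω => g (A ω)) (g a))) := by
  rw [entropyRV_eq_expVal_neg_log, expVal_comp hA]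

lemma entropyRV_comp_le [IsFiniteMeasure μ] [Fintype β] (hA : Measurable A) (g : α → β) :
    entropyRV μ (fun ω => g (A ω)) ≤ entropyRV μ A := by
  rw [entropyRV_comp_eq_expVal_neg_log hA, entropyRV_eq_expVal_neg_log]
  refine Finset.sum_le_sum fun a _ => ?_
  rcases (pmass_nonneg (μ := μ) A a).eq_or_lt with hzero | hpos
  · simp [← hzero]
  · have hlog : Real.log (pmass μ A a) ≤ Real.log (pmass μ (fun ω => g (A ω)) (g a)) :=
      Real.log_le_log hpos (pmass_le_pmass_comp A g a)
    exact mul_le_mul_of_nonneg_left (neg_le_neg hlog) hpos.le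

lemma condEntropyRV_nonneg [IsFiniteMeasure μ] [Fintype β] [MeasurableSpace β]
    [DiscreteMeasurableSpace β] {B : Ω → β} (hA : Measurable A) (hB : Measurable B) :
    0 ≤ condEntropyRV μ A B :=
  sub_nonneg.2 (entropyRV_comp_le (hA.prodMk hB) Prod.snd)

lemma negMulLog_le_mul_neg_log_add_sub {p q : ℝ} (hp : 0 ≤ p) (hq : 0 ≤ q) (hpq : q = 0 → p = 0) :
    Real.negMulLog p ≤ p * -Real.log q + (q - p) := by
  rcases hp.eq_or_lt with rfl | hp
  · simpa using hq
  have hq : 0 < q := hq.lt_of_ne fun h => hp.ne' (hpq h.symm)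
  calc
    Real.negMulLog p = p * -Real.log q + p * Real.log (q / p) := by
      rw [Real.log_div hq.ne' hp.ne', Real.negMulLog]
      ring
    _ ≤ p * -Real.log q + p * (q / p - 1) := by
      gcongr
      exact Real.log_le_sub_one_of_pos (div_pos hq hp)
    _ = p * -Real.log q + (q - p) := by
      field_simp

lemma entropyRV_le_expVal_neg_log [IsProbabilityMeasure μ] (hA : Measurable A) {q : α → ℝ}
    (hq : ∀ a, 0 ≤ q a) (hq_sum : ∑ a, q a ≤ 1) (hAq : ∀ a, q a = 0 → pmass μ A a = 0) :
    entropyRV μ A ≤ expVal μ A (fun a => -Real.log (q a)) := by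
  calc
    entropyRV μ A ≤ ∑ a, (pmass μ A a * -Real.log (q a) + (q a - pmass μ A a)) :=
      Finset.sum_le_sum fun a _ =>
        negMulLog_le_mul_neg_log_add_sub (pmass_nonneg A a) (hq a) (hAq a)
    _ = expVal μ A (fun a => -Real.log (q a)) + (∑ a, q a - 1) := by
      rw [Finset.sum_add_distrib, Finset.sum_sub_distrib, sum_pmass hA, expVal]
    _ ≤ expVal μ A (fun a => -Real.log (q a)) := by linarith

lemma entropyRV_prodMk_le [IsProbabilityMeasure μ] [Fintype β] [MeasurableSpace β]
    [DiscreteMeasurableSpace β] {B : Ω → β} (hA : Measurable A) (hB : Measurable B) :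
    entropyRV μ (fun ω => (A ω, B ω)) ≤ entropyRV μ A + entropyRV μ B := by
  have hAB := hA.prodMk hB
  have hfst (c : α × β) (hc : pmass μ A c.1 = 0) : pmass μ (fun ω => (A ω, B ω)) c = 0 :=
    ((pmass_le_pmass_comp _ Prod.fst c).trans_eq hc).antisymm (pmass_nonneg _ c)
  have hsnd (c : α × β) (hc : pmass μ B c.2 = 0) : pmass μ (fun ω => (A ω, B ω)) c = 0 :=
    ((pmass_le_pmass_comp _ Prod.snd c).trans_eq hc).antisymm (pmass_nonneg _ c)
  calc
    entropyRV μ (fun ω => (A ω, B ω)) ≤ expVal μ (fun ω => (A ω, B ω))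
        (fun c => -Real.log (pmass μ A c.1 * pmass μ B c.2)) := by
      refine entropyRV_le_expVal_neg_log hAB
        (fun c => mul_nonneg (pmass_nonneg _ _) (pmass_nonneg _ _)) ?_
        (fun c hc => (mul_eq_zero.1 hc).elim (hfst c) (hsnd c))
      rw [Fintype.sum_prod_type, ← Fintype.sum_mul_sum, sum_pmass hA, sum_pmass hB, one_mul]
    _ = expVal μ (fun ω => (A ω, B ω)) (fun c => -Real.log (pmass μ A c.1))
        + expVal μ (fun ω => (A ω, B ω)) (fun c => -Real.log (pmass μ B c.2)) := by
      simp only [expVal, ← Finset.sum_add_distrib]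
      refine Finset.sum_congr rfl fun c _ => ?_
      by_cases hc : pmass μ (fun ω => (A ω, B ω)) c = 0
      · simp [hc]
      · rw [Real.log_mul (mt (hfst c) hc) (mt (hsnd c) hc)]
        ring
    _ = entropyRV μ A + entropyRV μ B :=
      (congrArg₂ (· + ·) (entropyRV_comp_eq_expVal_neg_log hAB Prod.fst)
        (entropyRV_comp_eq_expVal_neg_log hAB Prod.snd)).symm

lemma condEntropyRV_le_entropyRV [IsProbabilityMeasure μ] [Fintype β] [MeasurableSpace β]
    [DiscreteMeasurableSpace β] {B : Ω → β} (hA : Measurable A) (hB : Measurable B) :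
    condEntropyRV μ A B ≤ entropyRV μ A :=
  sub_le_iff_le_add.2 (entropyRV_prodMk_le hA hB)

end EntropyInequalities

section Independence

lemma negMulLog_prod {ι : Type*} (s : Finset ι) (f : ι → ℝ) :
    Real.negMulLog (∏ i ∈ s, f i) = ∑ i ∈ s, (∏ j ∈ s, f j) * -Real.log (f i) := by
  by_cases hf : ∃ i ∈ s, f i = 0
  · obtain ⟨i, hi, hfi⟩ := hf
    simp [Finset.prod_eq_zero hi hfi]
  · push Not at hf
    rw [Real.negMulLog, Real.log_prod hf, ← Finset.mul_sum, Finset.sum_neg_distrib, neg_mul_comm]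

variable {Ω ι : Type*} [MeasurableSpace Ω] {μ : Measure Ω} [Fintype ι]

lemma iIndepFun_iff_pmass_eq_prod [IsProbabilityMeasure μ] {α : ι → Type*} [∀ i, Countable (α i)]
    [∀ i, MeasurableSpace (α i)] [∀ i, DiscreteMeasurableSpace (α i)] {A : Ω → ∀ i, α i}
    (hA : Measurable A) :
    iIndepFun (fun i ω => A ω i) μ ↔
      ∀ v, pmass μ A v = ∏ i, pmass μ (fun ω => A ω i) (v i) := by
  have hAi (i : ι) : Measurable fun ω => A ω i := measurable_pi_iff.1 hA i
  have (i : ι) : IsProbabilityMeasure (μ.map fun ω => A ω i) :=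
    Measure.isProbabilityMeasure_map (hAi i).aemeasurable
  have := Measure.isProbabilityMeasure_map (μ := μ) hA.aemeasurable
  rw [iIndepFun_iff_map_fun_eq_pi_map fun i => (hAi i).aemeasurable, ext_iff_measureReal_singleton]
  refine forall_congr' fun v => ?_
  rw [map_measureReal_apply hA (measurableSet_singleton v), measureReal_def (Measure.pi _),
    Measure.pi_singleton, ENNReal.toReal_prod]
  simp only [Measure.map_apply (hAi _) (measurableSet_singleton _), pmass, measureReal_def]

lemma entropyRV_eq_sum_of_iIndepFun [DecidableEq ι] {α : ι → Type*} [∀ i, Fintype (α i)]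
    [∀ i, MeasurableSpace (α i)] [∀ i, DiscreteMeasurableSpace (α i)] {A : Ω → ∀ i, α i}
    (hA : Measurable A) (hind : iIndepFun (fun i ω => A ω i) μ) :
    entropyRV μ A = ∑ i, entropyRV μ (fun ω => A ω i) := by
  have := hind.isProbabilityMeasure
  have hprod := (iIndepFun_iff_pmass_eq_prod hA).1 hind
  calc
    entropyRV μ A = ∑ v, ∑ i, pmass μ A v * -Real.log (pmass μ (fun ω => A ω i) (v i)) := by
      simp only [entropyRV, hprod, negMulLog_prod]
    _ = ∑ i, expVal μ A (fun v => -Real.log (pmass μ (fun ω => A ω i) (v i))) :=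
      Finset.sum_comm
    _ = ∑ i, entropyRV μ (fun ω => A ω i) :=
      Finset.sum_congr rfl fun i _ => (entropyRV_comp_eq_expVal_neg_log hA fun v => v i).symm

lemma condEntropyRV_eq_sum_of_iIndepFun [DecidableEq ι] {α β : Type*} [Fintype α] [Fintype β]
    [MeasurableSpace α] [MeasurableSpace β] [DiscreteMeasurableSpace α] [DiscreteMeasurableSpace β]
    {A : Ω → ι → α} {B : Ω → ι → β} (hA : Measurable A) (hB : Measurable B)
    (hind : iIndepFun (fun i ω => (A ω i, B ω i)) μ) :
    condEntropyRV μ A B = ∑ i, condEntropyRV μ (fun ω => A ω i) (fun ω => B ω i) := by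
  have hzip : entropyRV μ (fun ω => (A ω, B ω)) = entropyRV μ (fun ω i => (A ω i, B ω i)) :=
    entropyRV_congr fun ω ω' => by simp only [Prod.mk.injEq, funext_iff, forall_and]
  have hindB : iIndepFun (fun i ω => B ω i) μ :=
    hind.comp (fun _ => Prod.snd) fun _ => measurable_snd
  have hpair : Measurable fun ω i => (A ω i, B ω i) := by fun_prop
  simp only [condEntropyRV, Finset.sum_sub_distrib]
  rw [hzip, entropyRV_eq_sum_of_iIndepFun hpair hind, entropyRV_eq_sum_of_iIndepFun hB hindB]

variable {α : Type*} [MeasurableSpace α] [DiscreteMeasurableSpace α] {n : ℕ} {S : Ω → Fin n → α}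
  {p : α → ℝ}

lemma HasIIDLaw.pmass_eval [Fintype α] [IsFiniteMeasure μ] (h : HasIIDLaw μ S p) (hS : Measurable S)
    (i : Fin n) (a : α) :
    pmass μ (fun ω => S ω i) a = p a * (∑ b, p b) ^ (n - 1) := by
  classical
  let t : Fin n → Finset α := Function.update (fun _ => Finset.univ) i {a}
  have hpreimage : (fun ω => S ω i) ⁻¹' {a} = S ⁻¹' (Fintype.piFinset t : Set (Fin n → α)) := by
    ext ω
    simp [t, Function.update_apply, apply_ite]
  calc
    pmass μ (fun ω => S ω i) a = ∑ v ∈ Fintype.piFinset t, ∏ j, p (v j) := by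
      rw [pmass, hpreimage, ← measureReal_def, ← sum_pmass_eq_measureReal hS]
      exact Finset.sum_congr rfl fun v _ => h v
    _ = ∏ j, ∑ b ∈ t j, p b := (Finset.prod_univ_sum t fun _ => p).symm
    _ = p a * (∑ b, p b) ^ (n - 1) := by
      rw [← Finset.mul_prod_erase _ _ (Finset.mem_univ i)]
      have herase : ∏ j ∈ Finset.univ.erase i, ∑ b ∈ t j, p b = (∑ b, p b) ^ (n - 1) := by
        rw [Finset.prod_eq_pow_card (b := ∑ b, p b) fun j hj => by
          simp [t, Finset.ne_of_mem_erase hj]]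
        simp
      rw [herase]
      simp [t]

-- The total mass `c` of `p` need not be `1`, but `c ^ n = 1`, so the factors `c ^ (n - 1)` of the
-- `n` marginals multiply to `1`.
lemma HasIIDLaw.iIndepFun_eval [Finite α] [IsProbabilityMeasure μ] (h : HasIIDLaw μ S p)
    (hS : Measurable S) : iIndepFun (fun i ω => S ω i) μ := by
  have := Fintype.ofFinite α
  have htotal : (∑ a, p a) ^ n = 1 := by
    rw [Fintype.sum_pow, ← sum_pmass (μ := μ) hS]
    exact Finset.sum_congr rfl fun v _ => (h v).symm
  refine (iIndepFun_iff_pmass_eq_prod hS).2 fun v => ?_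
  simp only [h.pmass_eval hS, Finset.prod_mul_distrib, Finset.prod_const, Finset.card_univ,
    Fintype.card_fin]
  rw [pow_right_comm, htotal, one_pow, mul_one, h v]

end Independence

section PrivacyLeakage

variable {Ω 𝒳 𝒴 𝒵 𝒲 𝒦 : Type*} {n : ℕ}

/-- The auxiliary variable `U_i = (W, Y_{i+1}^n, Z^{i-1}, X^{i-1}, K)` of the converse; the variable
`V_i` is `pastFuture W Z Y i`. -/
def auxU (W : Ω → 𝒲) (K : Ω → 𝒦) (X : Ω → Fin n → 𝒳) (Y : Ω → Fin n → 𝒴) (Z : Ω → Fin n → 𝒵)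
    (i : Fin n) (ω : Ω) :
    𝒲 × ({j : Fin n // i < j} → 𝒴) × ({j : Fin n // j.1 < i} → 𝒵) ×
      ({j : Fin n // j.1 < i} → 𝒳) × 𝒦 :=
  (W ω, fun j => Y ω j, fun j => Z ω j, fun j => X ω j, K ω)

lemma pastFuture_factorsThrough_auxU (W : Ω → 𝒲) (K : Ω → 𝒦) (X : Ω → Fin n → 𝒳)
    (Y : Ω → Fin n → 𝒴) (Z : Ω → Fin n → 𝒵) (i : Fin n) :
    (pastFuture W Z Y i).FactorsThrough (auxU W K X Y Z i) := by
  intro ω ω' h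
  simp only [auxU, Prod.mk.injEq] at h
  simp only [pastFuture, h]

variable [MeasurableSpace Ω] [Fintype 𝒳] [Fintype 𝒴] [Fintype 𝒵] [Fintype 𝒲] [Fintype 𝒦]
  {μ : Measure Ω}

lemma condEntropyRV_auxU {α : Type*} [Fintype α] (A : Ω → α) (W : Ω → 𝒲) (K : Ω → 𝒦)
    (X : Ω → Fin n → 𝒳) (Y : Ω → Fin n → 𝒴) (Z : Ω → Fin n → 𝒵) (i : Fin n) :
    condEntropyRV μ A (auxU W K X Y Z i) =
      condEntropyRV μ A
        (pastFuture (fun ω => (W ω, K ω)) (fun ω j => (X ω j, Z ω j)) Y i) := by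
  refine condEntropyRV_congr_right A fun ω ω' => ?_
  simp only [auxU, pastFuture, Prod.mk.injEq, funext_iff, forall_and]
  tauto

theorem sum_condMutualInfoRV_auxU_eq (W : Ω → 𝒲) (K : Ω → 𝒦) (X : Ω → Fin n → 𝒳)
    (Y : Ω → Fin n → 𝒴) (Z : Ω → Fin n → 𝒵) :
    ∑ i, (condMutualInfoRV μ (auxU W K X Y Z i) (fun ω => X ω i) (fun ω => Z ω i)
        + (condMutualInfoRV μ (auxU W K X Y Z i) (fun ω => Z ω i) (pastFuture W Z Y i)
          - condMutualInfoRV μ (auxU W K X Y Z i) (fun ω => Y ω i) (pastFuture W Z Y i))) =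
      ∑ i, condEntropyRV μ (fun ω => X ω i) (fun ω => Z ω i)
        + (condEntropyRV μ Z W - condEntropyRV μ Y W)
        - (condEntropyRV μ (fun ω j => (X ω j, Z ω j)) (fun ω => (W ω, K ω))
          - condEntropyRV μ Y (fun ω => (W ω, K ω))) := by
  rw [← csiszar_sum_identity W Z Y, ← csiszar_sum_identity (fun ω => (W ω, K ω)) _ Y,
    ← Finset.sum_add_distrib, ← Finset.sum_sub_distrib]
  refine Finset.sum_congr rfl fun i _ => ?_
  rw [condMutualInfoRV_add_sub_eq _ _ _ (pastFuture_factorsThrough_auxU W K X Y Z i),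
    condEntropyRV_auxU, condEntropyRV_auxU]

lemma condMutualInfoRV_eq_add_condEntropyRV_sub (W : Ω → 𝒲) (K : Ω → 𝒦) (X : Ω → 𝒳) (Y : Ω → 𝒴)
    (Z : Ω → 𝒵) :
    condMutualInfoRV μ X W Z =
      condEntropyRV μ X Z + (condEntropyRV μ Z W - condEntropyRV μ Y W)
        - (condEntropyRV μ (fun ω => (X ω, Z ω)) (fun ω => (W ω, K ω))
          - condEntropyRV μ Y (fun ω => (W ω, K ω)))
        + (condEntropyRV μ K (fun ω => (X ω, W ω, Z ω))
          - condEntropyRV μ K (fun ω => (Y ω, W ω))) := by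
  have hWZ : entropyRV μ (fun ω => (W ω, Z ω)) = entropyRV μ (fun ω => (Z ω, W ω)) :=
    entropyRV_congr fun ω ω' => by simp only [Prod.mk.injEq, and_comm]
  have hKXWZ : entropyRV μ (fun ω => (K ω, X ω, W ω, Z ω)) =
      entropyRV μ (fun ω => ((X ω, Z ω), W ω, K ω)) :=
    entropyRV_congr fun ω ω' => by simp only [Prod.mk.injEq]; tauto
  have hKYW : entropyRV μ (fun ω => (K ω, Y ω, W ω)) = entropyRV μ (fun ω => (Y ω, W ω, K ω)) :=
    entropyRV_congr fun ω ω' => by simp only [Prod.mk.injEq]; tauto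
  simp only [condMutualInfoRV, condEntropyRV, hWZ, hKXWZ, hKYW]
  ring

variable [MeasurableSpace 𝒳] [DiscreteMeasurableSpace 𝒳] [MeasurableSpace 𝒴]
  [DiscreteMeasurableSpace 𝒴] [MeasurableSpace 𝒵] [DiscreteMeasurableSpace 𝒵]
  [MeasurableSpace 𝒲] [DiscreteMeasurableSpace 𝒲] [MeasurableSpace 𝒦] [DiscreteMeasurableSpace 𝒦]

theorem privacy_leakage_converse_small_key_general {W : Ω → 𝒲} {K : Ω → 𝒦} {X : Ω → Fin n → 𝒳}
    {Y : Ω → Fin n → 𝒴} {Z : Ω → Fin n → 𝒵} (hW : Measurable W) (hK : Measurable K)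
    (hX : Measurable X) (hY : Measurable Y) (hZ : Measurable Z)
    (hXZ : iIndepFun (fun i ω => (X ω i, Z ω i)) μ) :
    ∑ i, (condMutualInfoRV μ (auxU W K X Y Z i) (fun ω => X ω i) (fun ω => Z ω i)
        + (condMutualInfoRV μ (auxU W K X Y Z i) (fun ω => Z ω i) (pastFuture W Z Y i)
          - condMutualInfoRV μ (auxU W K X Y Z i) (fun ω => Y ω i) (pastFuture W Z Y i)))
        - entropyRV μ K ≤
      condMutualInfoRV μ X W Z := by
  have := hXZ.isProbabilityMeasure
  have hzip : condEntropyRV μ (fun ω j => (X ω j, Z ω j)) (fun ω => (W ω, K ω)) =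
      condEntropyRV μ (fun ω => (X ω, Z ω)) (fun ω => (W ω, K ω)) :=
    condEntropyRV_congr_left _ fun ω ω' => by simp only [Prod.mk.injEq, funext_iff, forall_and]
  have hK_nonneg : 0 ≤ condEntropyRV μ K (fun ω => (X ω, W ω, Z ω)) :=
    condEntropyRV_nonneg hK (by fun_prop)
  have hK_le : condEntropyRV μ K (fun ω => (Y ω, W ω)) ≤ entropyRV μ K :=
    condEntropyRV_le_entropyRV hK (by fun_prop)
  rw [sum_condMutualInfoRV_auxU_eq, hzip, ← condEntropyRV_eq_sum_of_iIndepFun hX hZ hXZ,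
    condMutualInfoRV_eq_add_condEntropyRV_sub W K X Y Z]
  linarith

end PrivacyLeakage

/-- **Privacy-leakage converse bound (small key regime)**: under the converse setup,
`I(Xⁿ; W | Zⁿ) ≥ ∑ᵢ ( I(Uᵢ; Xᵢ | Zᵢ) + [I(Uᵢ; Zᵢ | Vᵢ) − I(Uᵢ; Yᵢ | Vᵢ)]⁻ ) − H(K)`. -/
theorem privacy_leakage_converse_small_key
    {𝒳 𝒳t 𝒴 𝒵 𝒲 𝒦 : Type}
    [Fintype 𝒳] [Fintype 𝒳t] [Fintype 𝒴] [Fintype 𝒵] [Fintype 𝒲] [Fintype 𝒦]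
    [MeasurableSpace 𝒳] [DiscreteMeasurableSpace 𝒳]
    [MeasurableSpace 𝒳t] [DiscreteMeasurableSpace 𝒳t]
    [MeasurableSpace 𝒴] [DiscreteMeasurableSpace 𝒴]
    [MeasurableSpace 𝒵] [DiscreteMeasurableSpace 𝒵]
    [MeasurableSpace 𝒲] [DiscreteMeasurableSpace 𝒲]
    [MeasurableSpace 𝒦] [DiscreteMeasurableSpace 𝒦]
    {Ω : Type} [MeasurableSpace Ω] (μ : MeasureTheory.Measure Ω)
    [MeasureTheory.IsProbabilityMeasure μ]
    {n : ℕ} (S : Ω → Fin n → 𝒳t × 𝒳 × 𝒴 × 𝒵) (K : Ω → 𝒦)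
    (hSmeas : Measurable S) (hKmeas : Measurable K)
    (pX : 𝒳 → ℝ) (pXt : 𝒳 → 𝒳t → ℝ) (pYZ : 𝒳 → 𝒴 × 𝒵 → ℝ)
    (hpX0 : ∀ x, 0 ≤ pX x) (hpX1 : ∑ x, pX x = 1)
    (hpXt0 : ∀ x a, 0 ≤ pXt x a) (hpXt1 : ∀ x, ∑ a, pXt x a = 1)
    (hpYZ0 : ∀ x yz, 0 ≤ pYZ x yz) (hpYZ1 : ∀ x, ∑ yz, pYZ x yz = 1)
    (hiid : HasIIDLaw μ S (fun s => pX s.2.1 * pXt s.2.1 s.1 * pYZ s.2.1 s.2.2))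
    (hKunif : UniformRV μ K) (hKind : IndepRV μ K S)
    (enc : (Fin n → 𝒳t) → 𝒦 → 𝒲)
    :
    condMutualInfoRV μ (fun ω => fun j => (S ω j).2.1)
      (fun ω => enc (fun j => (S ω j).1) (K ω))
      (fun ω => fun j => (S ω j).2.2.2)
    ≥ (∑ i : Fin n,
        (condMutualInfoRV μ
          (fun ω => (enc (fun j => (S ω j).1) (K ω),
          (fun j : {j : Fin n // i < j} => (S ω j.1).2.2.1),
          (fun j : {j : Fin n // j.1 < i} => (S ω j.1).2.2.2),
          (fun j : {j : Fin n // j.1 < i} => (S ω j.1).2.1),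
          K ω))
          (fun ω => (S ω i).2.1) (fun ω => (S ω i).2.2.2)
        + negPartR (condMutualInfoRV μ
            (fun ω => (enc (fun j => (S ω j).1) (K ω),
          (fun j : {j : Fin n // i < j} => (S ω j.1).2.2.1),
          (fun j : {j : Fin n // j.1 < i} => (S ω j.1).2.2.2),
          (fun j : {j : Fin n // j.1 < i} => (S ω j.1).2.1),
          K ω))
            (fun ω => (S ω i).2.2.2)
            (fun ω => (enc (fun j => (S ω j).1) (K ω),
          (fun j : {j : Fin n // i < j} => (S ω j.1).2.2.1),
          (fun j : {j : Fin n // j.1 < i} => (S ω j.1).2.2.2)))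
          - condMutualInfoRV μ
            (fun ω => (enc (fun j => (S ω j).1) (K ω),
          (fun j : {j : Fin n // i < j} => (S ω j.1).2.2.1),
          (fun j : {j : Fin n // j.1 < i} => (S ω j.1).2.2.2),
          (fun j : {j : Fin n // j.1 < i} => (S ω j.1).2.1),
          K ω))
            (fun ω => (S ω i).2.2.1)
            (fun ω => (enc (fun j => (S ω j).1) (K ω),
          (fun j : {j : Fin n // i < j} => (S ω j.1).2.2.1),
          (fun j : {j : Fin n // j.1 < i} => (S ω j.1).2.2.2))))))
      - entropyRV μ K := by
  have hpairs : iIndepFun (fun i ω => ((S ω i).2.1, (S ω i).2.2.2)) μ :=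
    (hiid.iIndepFun_eval hSmeas).comp (fun _ s => (s.2.1, s.2.2.2)) fun _ => .of_discrete
  have hXtK : Measurable fun ω => ((fun j => (S ω j).1), K ω) := by fun_prop
  have henc : Measurable fun ω => enc (fun j => (S ω j).1) (K ω) :=
    (Measurable.of_discrete : Measurable (Function.uncurry enc)).comp hXtK
  refine le_trans ?_ (privacy_leakage_converse_small_key_general henc hKmeas
    (X := fun ω j => (S ω j).2.1) (Y := fun ω j => (S ω j).2.2.1) (Z := fun ω j => (S ω j).2.2.2)
    (by fun_prop) (by fun_prop) (by fun_prop) hpairs)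
  exact sub_le_sub_right
    (Finset.sum_le_sum fun _ _ => add_le_add le_rfl (min_le_left _ _)) _
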